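/- arXiv:1707.09060 — 2 statements merged into one kernel-verified Lean document; each statement's English description precedes it below -/
import Mathlib

section
/- Unbiasedness of the one-point gradient estimator (Lemma 1, one-point case): Let f : ℝ^d → ℝ be Lipschitz continuous and bounded, and let δ > 0. Define the smoothed function f̌(x) := E_v[ f(x + δv) ], where v is uniformly distributed on the closed unit ball B = {v ∈ ℝ^d : ‖v‖ ≤ 1}. Then f̌ is differentiable on ℝ^d and for every x ∈ ℝ^d, ∇f̌(x) = E_u[ (d/δ) f(x + δu) u ], where u is uniformly distributed on the unit sphere S = {u ∈ ℝ^d : ‖u‖ = 1}. -/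
open MeasureTheory Metric

/-- The uniform (normalized Lebesgue) probability measure on the closed unit
ball of `ℝ^d`. -/
noncomputable def ballUniform (d : ℕ) : Measure (EuclideanSpace ℝ (Fin d)) :=
  (volume (closedBall (0 : EuclideanSpace ℝ (Fin d)) 1))⁻¹ •
    volume.restrict (closedBall (0 : EuclideanSpace ℝ (Fin d)) 1)

/-- The uniform (normalized surface) probability measure on the unit sphere of
`ℝ^d`, viewed as a measure on `ℝ^d`. -/
noncomputable def sphereUniform (d : ℕ) : Measure (EuclideanSpace ℝ (Fin d)) :=
  Measure.map Subtype.val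
    (((volume : Measure (EuclideanSpace ℝ (Fin d))).toSphere Set.univ)⁻¹ •
      (volume : Measure (EuclideanSpace ℝ (Fin d))).toSphere)

open Set Filter Topology in
lemma polar_integral (d : ℕ) (hd : 0 < d) (Φ : EuclideanSpace ℝ (Fin d) → ℝ)
    (hΦ : Integrable Φ) :
    ∫ v, Φ v = ∫ r in Ioi (0:ℝ), r ^ (d - 1) *
      ∫ u : sphere (0 : EuclideanSpace ℝ (Fin d)) 1, Φ (r • (u : EuclideanSpace ℝ (Fin d)))
        ∂((volume : Measure (EuclideanSpace ℝ (Fin d))).toSphere) := by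
  have : Nonempty (Fin d) := ⟨⟨0, hd⟩⟩
  let E := EuclideanSpace ℝ (Fin d)
  let μ : Measure E := volume
  have hdim : Module.finrank ℝ E = d := by simp [E]
  have key := μ.measurePreserving_homeomorphUnitSphereProd
  rw [hdim] at key
  let G : sphere (0 : E) 1 × Ioi (0:ℝ) → ℝ := fun p => Φ ((p.2 : ℝ) • (p.1 : E))
  have hG : ∀ x : ({0}ᶜ : Set E), G (homeomorphUnitSphereProd E x) = Φ x := by
    intro x
    have : ‖(x : E)‖ ≠ 0 := norm_ne_zero_iff.2 x.2
    simp [G, smul_smul, this]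
  have hGint : Integrable G (μ.toSphere.prod (Measure.volumeIoiPow (d - 1))) := by
    rw [← key.integrable_comp_emb (Homeomorph.measurableEmbedding _)]
    have : G ∘ (homeomorphUnitSphereProd E) = Φ ∘ Subtype.val := by
      ext x; exact hG x
    rw [this, ← integrableOn_iff_comap_subtypeVal (measurableSet_singleton _).compl]
    exact hΦ.integrableOn
  calc ∫ v, Φ v = ∫ x : ({(0)}ᶜ : Set E), Φ x.1 ∂(μ.comap (↑)) := by
        rw [integral_subtype_comap (measurableSet_singleton _).compl Φ,
          restrict_compl_singleton]
    _ = ∫ p, G p ∂(μ.toSphere.prod (Measure.volumeIoiPow (d - 1))) := by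
        rw [← key.integral_comp (Homeomorph.measurableEmbedding _)]
        exact integral_congr_ae (.of_forall fun x => (hG x).symm)
    _ = ∫ r : Ioi (0:ℝ), ∫ u : sphere (0 : E) 1, Φ ((r : ℝ) • (u : E)) ∂μ.toSphere
          ∂(Measure.volumeIoiPow (d - 1)) := by
        rw [integral_prod_symm _ hGint]
    _ = _ := by
        simp only [Measure.volumeIoiPow, ENNReal.ofReal]
        rw [integral_withDensity_eq_integral_smul,
          integral_subtype_comap measurableSet_Ioi fun a ↦ Real.toNNReal (a ^ (d - 1)) •
            ∫ u : sphere (0 : E) 1, Φ ((a : ℝ) • (u : E)) ∂μ.toSphere,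
          setIntegral_congr_fun measurableSet_Ioi fun x hx ↦ ?_]
        · simp only [NNReal.smul_def]
          rw [Real.coe_toNNReal _ (pow_nonneg hx.out.le _)]; rfl
        · exact (measurable_subtype_coe.pow_const _).real_toNNReal

open Set Filter Topology in
lemma lineDeriv_tent {d : ℕ} (R : ℝ) (v e : EuclideanSpace ℝ (Fin d)) (hv : v ≠ 0)
    (hR : ‖v‖ ≠ R) :
    lineDeriv ℝ (fun v : EuclideanSpace ℝ (Fin d) => max 0 (R - ‖v‖)) v (-e) =
      if ‖v‖ < R then inner ℝ v e / ‖v‖ else 0 := by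
  apply HasLineDerivAt.lineDeriv
  unfold HasLineDerivAt
  have hc : ContinuousAt (fun t : ℝ => ‖v + t • (-e)‖) 0 := by fun_prop
  have h0 : ‖v + (0:ℝ) • (-e)‖ = ‖v‖ := by simp
  split_ifs with h
  · have h1 : HasDerivAt (fun t : ℝ => v + t • (-e)) (-e) 0 := by
      simpa using ((hasDerivAt_id (0:ℝ)).smul_const (-e)).const_add v
    have h2 := h1.norm_sq.sqrt (by simpa using hv)
    have h3 : HasDerivAt (fun t : ℝ => R - ‖v + t • (-e)‖) (inner ℝ v e / ‖v‖) 0 := by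
      have h4 := h2.const_sub R
      simp only [Real.sqrt_sq (norm_nonneg _), h0] at h4
      have : ‖v‖ ≠ 0 := norm_ne_zero_iff.2 hv
      have h5 : inner ℝ v e / ‖v‖ = -(2 * inner ℝ (v + (0:ℝ) • -e) (-e) / (2 * ‖v‖)) := by
        rw [zero_smul, add_zero, inner_neg_right]
        field_simp
      rw [h5]
      exact h4
    refine h3.congr_of_eventuallyEq ?_
    filter_upwards [hc.eventually_lt_const (by rwa [h0] : ‖v + (0:ℝ) • (-e)‖ < R)] with t ht
    exact max_eq_right (by linarith)
  · have h' : R < ‖v‖ := lt_of_le_of_ne (not_lt.1 h) (Ne.symm hR)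
    refine (hasDerivAt_const (0:ℝ) (0:ℝ)).congr_of_eventuallyEq ?_
    filter_upwards [hc.eventually_const_lt (by rwa [h0] : R < ‖v + (0:ℝ) • (-e)‖)] with t ht
    exact max_eq_left (by linarith)

open Set Filter Topology in
lemma unit_ball_divergence (d : ℕ) (hd : 0 < d) (h : EuclideanSpace ℝ (Fin d) → ℝ) (C : NNReal)
    (hh : LipschitzWith C h) (e : EuclideanSpace ℝ (Fin d)) :
    ∫ v in closedBall (0 : EuclideanSpace ℝ (Fin d)) 1, lineDeriv ℝ h v e =
      ∫ u : sphere (0 : EuclideanSpace ℝ (Fin d)) 1,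
        h u * inner ℝ (u : EuclideanSpace ℝ (Fin d)) e
        ∂((volume : Measure (EuclideanSpace ℝ (Fin d))).toSphere) := by
  have : Nonempty (Fin d) := ⟨⟨0, hd⟩⟩
  let E := EuclideanSpace ℝ (Fin d)
  let σ := (volume : Measure E).toSphere
  let K : ℝ → ℝ := fun r => ∫ u : sphere (0 : E) 1, h (r • (u : E)) * inner ℝ (u : E) e ∂σ
  have hhc := hh.continuous
  have hK : Continuous K := by
    have hc : Continuous (Function.uncurry
        (fun (r : ℝ) (u : sphere (0 : E) 1) => h (r • (u : E)) * inner ℝ (u : E) e)) := by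
      unfold Function.uncurry
      fun_prop
    have := continuous_parametric_integral_of_continuous (μ := σ) hc isCompact_univ
    simpa using this
  have hsph : ∀ R : ℝ, R ≠ 0 → ∀ᵐ v : E, ‖v‖ ≠ R := by
    intro R hR
    have := Measure.addHaar_sphere_of_ne_zero (volume : Measure E) 0 hR
    rw [measure_eq_zero_iff_ae_notMem] at this
    filter_upwards [this] with v hv
    simpa using hv
  have hz : ∀ᵐ v : E, v ≠ 0 := by
    have : (volume : Measure E) {0} = 0 := measure_singleton 0
    rw [measure_eq_zero_iff_ae_notMem] at this
    filter_upwards [this] with v hv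
    simpa using hv
  have hmeas : StronglyMeasurable (fun v => lineDeriv ℝ h v e) := stronglyMeasurable_lineDeriv hhc
  -- right side
  have hR : ∀ R : ℝ, 0 < R → ∫ v : E, lineDeriv ℝ h v e * max 0 (R - ‖v‖) =
      ∫ r in (0:ℝ)..R, r ^ (d - 1) * K r := by
    intro R hR
    have hlip : LipschitzWith 1 (fun v : E => max 0 (R - ‖v‖)) := by
      apply LipschitzWith.const_max
      simpa using (LipschitzWith.const (α := E) R).sub (lipschitzWith_one_norm (E := E))
    have hcs : HasCompactSupport (fun v : E => max 0 (R - ‖v‖)) := by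
      apply HasCompactSupport.intro (isCompact_closedBall (0 : E) R)
      intro v hv
      simp at hv
      exact max_eq_left (by linarith)
    rw [hh.integral_lineDeriv_mul_eq hlip hcs e]
    let Φ : E → ℝ := (ball (0:E) R).indicator (fun v => inner ℝ v e / ‖v‖ * h v)
    have e1 : ∫ v : E, lineDeriv ℝ (fun v : E => max 0 (R - ‖v‖)) v (-e) * h v = ∫ v, Φ v := by
      apply integral_congr_ae
      filter_upwards [hz, hsph R hR.ne'] with v h1 h2
      rw [lineDeriv_tent R v e h1 h2]
      simp only [Φ, indicator, mem_ball_zero_iff]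
      split_ifs <;> simp
    have hΦ : Integrable Φ := by
      rw [integrable_indicator_iff measurableSet_ball]
      obtain ⟨M, hM⟩ := (isCompact_closedBall (0 : E) R).exists_bound_of_continuousOn
        hhc.continuousOn
      apply Measure.integrableOn_of_bounded (M := ‖e‖ * M) measure_ball_lt_top.ne
      · apply Measurable.aestronglyMeasurable
        have := hhc.measurable
        fun_prop
      · filter_upwards [ae_restrict_mem measurableSet_ball] with v hv
        rw [norm_mul]
        apply mul_le_mul _ (hM v (ball_subset_closedBall hv)) (norm_nonneg _) (norm_nonneg _)
        rw [norm_div, norm_norm]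
        apply div_le_of_le_mul₀ (norm_nonneg _) (norm_nonneg _)
        rw [mul_comm]
        exact norm_inner_le_norm v e
    rw [e1, polar_integral d hd Φ hΦ, intervalIntegral.integral_of_le hR.le,
      integral_Ioc_eq_integral_Ioo]
    have e2 : ∀ r ∈ Ioi (0:ℝ), r ^ (d - 1) * ∫ u : sphere (0 : E) 1, Φ (r • (u : E)) ∂σ =
        (Iio R).indicator (fun r => r ^ (d - 1) * K r) r := by
      intro r hr
      have hr' : 0 < r := hr
      by_cases hrR : r < R
      · rw [indicator_of_mem (by exact hrR)]
        congr 1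
        apply integral_congr_ae
        filter_upwards with u
        have hu : ‖(u : E)‖ = 1 := by simp
        have hm : r • (u : E) ∈ ball (0 : E) R := by
          simp [norm_smul, abs_of_pos hr', hrR]
        simp only [Φ, indicator_of_mem hm, norm_smul, hu, inner_smul_left, Real.norm_eq_abs,
          abs_of_pos hr']
        simp
        field_simp
      · rw [indicator_of_notMem (by exact hrR)]
        have : ∀ u : sphere (0 : E) 1, Φ (r • (u : E)) = 0 := by
          intro u
          apply indicator_of_notMem
          simp [norm_smul, abs_of_pos hr', not_lt.1 hrR]
        simp [this]
    rw [setIntegral_congr_fun measurableSet_Ioi e2, setIntegral_indicator measurableSet_Iio]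
    rfl
  have hD1 : HasDerivAt (fun R : ℝ => ∫ r in (0:ℝ)..R, r ^ (d - 1) * K r) (K 1) 1 := by
    have hc : Continuous (fun r : ℝ => r ^ (d - 1) * K r) := by fun_prop
    simpa using hc.integral_hasStrictDerivAt 0 1 |>.hasDerivAt
  have hbd : ∀ v, ‖lineDeriv ℝ h v e‖ ≤ C * ‖e‖ := fun v => norm_lineDeriv_le_of_lipschitz ℝ hh
  have hD2 : HasDerivAt (fun R : ℝ => ∫ v : E, lineDeriv ℝ h v e * max 0 (R - ‖v‖))
      (∫ v, (closedBall (0:E) 1).indicator (fun v => lineDeriv ℝ h v e) v) 1 := by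
    refine (hasDerivAt_integral_of_dominated_loc_of_lip (s := ball 1 1)
      (bound := (closedBall (0:E) 2).indicator (fun _ => (C:ℝ) * ‖e‖))
      (ball_mem_nhds _ one_pos) ?_ ?_ ?_ ?_ ?_ ?_).2
    · refine .of_forall fun R => hmeas.aestronglyMeasurable.mul ?_
      exact Continuous.aestronglyMeasurable (by fun_prop)
    · have : Integrable ((closedBall (0:E) 2).indicator (fun _ => (C:ℝ) * ‖e‖)) := by
        rw [integrable_indicator_iff measurableSet_closedBall]
        exact integrableOn_const measure_closedBall_lt_top.ne
      refine this.mono' (hmeas.aestronglyMeasurable.mul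
        (Continuous.aestronglyMeasurable (by fun_prop))) (.of_forall fun v => ?_)
      by_cases hv : v ∈ closedBall (0:E) 2
      · rw [indicator_of_mem hv, norm_mul]
        have : ‖max 0 (1 - ‖v‖)‖ ≤ 1 := by
          rw [Real.norm_of_nonneg (le_max_left _ _)]
          exact max_le zero_le_one (by linarith [norm_nonneg v])
        exact (mul_le_mul (hbd v) this (norm_nonneg _) (by positivity)).trans (by simp)
      · rw [indicator_of_notMem hv]
        simp at hv
        rw [max_eq_left (by linarith)]; simp
    · exact (hmeas.indicator measurableSet_closedBall).aestronglyMeasurable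
    · refine .of_forall fun v => LipschitzOnWith.of_dist_le_mul fun R hR S hS => ?_
      simp only [Real.coe_nnabs]
      by_cases hv : v ∈ closedBall (0:E) 2
      · rw [indicator_of_mem hv, Real.dist_eq, ← mul_sub, abs_mul, Real.dist_eq]
        apply mul_le_mul ((hbd v).trans (le_abs_self _)) _ (abs_nonneg _) (abs_nonneg _)
        have := abs_max_sub_max_le_abs (R - ‖v‖) (S - ‖v‖) 0
        rw [max_comm, max_comm 0]
        simpa using this
      · rw [indicator_of_notMem hv]
        simp [Real.dist_eq, abs_lt] at hv hR hS
        rw [max_eq_left (by linarith), max_eq_left (by linarith)]; simp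
    · rw [integrable_indicator_iff measurableSet_closedBall]
      exact integrableOn_const measure_closedBall_lt_top.ne
    · filter_upwards [hsph 1 one_ne_zero] with v hv
      rcases lt_or_gt_of_ne hv with h1 | h1
      · rw [indicator_of_mem (by simpa using h1.le)]
        have : HasDerivAt (fun R : ℝ => lineDeriv ℝ h v e * (R - ‖v‖)) (lineDeriv ℝ h v e) 1 := by
          simpa using ((hasDerivAt_id (1:ℝ)).sub_const ‖v‖).const_mul (lineDeriv ℝ h v e)
        refine this.congr_of_eventuallyEq ?_
        filter_upwards [eventually_gt_nhds h1] with R hR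
        rw [max_eq_right (by linarith)]
      · rw [indicator_of_notMem (by simpa using h1)]
        refine (hasDerivAt_const (1:ℝ) (0:ℝ)).congr_of_eventuallyEq ?_
        filter_upwards [eventually_lt_nhds h1] with R hR
        rw [max_eq_left (by linarith), mul_zero]
  rw [integral_indicator measurableSet_closedBall] at hD2
  have hD3 := hD1.congr_of_eventuallyEq (f₁ := fun R : ℝ => ∫ v : E, lineDeriv ℝ h v e * max 0 (R - ‖v‖))
    (by filter_upwards [eventually_gt_nhds (zero_lt_one (α := ℝ))] with R h0; exact hR R h0)
  rw [hD2.unique hD3]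
  simp [K, σ, E]

theorem one_point_gradient_estimator_unbiased
    (d : ℕ) (hd : 0 < d)
    (f : EuclideanSpace ℝ (Fin d) → ℝ)
    (L : ℝ) (hlip : ∀ x y, |f x - f y| ≤ L * ‖x - y‖)
    (F : ℝ) (hbdd : ∀ x, |f x| ≤ F)
    (δ : ℝ) (hδ : 0 < δ) :
    Differentiable ℝ (fun y => ∫ v, f (y + δ • v) ∂(ballUniform d)) ∧
      ∀ x, gradient (fun y => ∫ v, f (y + δ • v) ∂(ballUniform d)) x =
        ∫ u, ((d : ℝ) / δ * f (x + δ • u)) • u ∂(sphereUniform d) := by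
  have : Nonempty (Fin d) := ⟨⟨0, hd⟩⟩
  have hf : LipschitzWith L.toNNReal f := by
    refine LipschitzWith.of_dist_le_mul fun x y => ?_
    rw [Real.dist_eq, dist_eq_norm]
    exact (hlip x y).trans
      (mul_le_mul_of_nonneg_right (Real.le_coe_toNNReal L) (norm_nonneg _))
  have hfc := hf.continuous
  let E := EuclideanSpace ℝ (Fin d)
  have hvol0 : volume (closedBall (0 : E) 1) ≠ 0 := (measure_closedBall_pos _ _ one_pos).ne'
  have hvolT : volume (closedBall (0 : E) 1) ≠ ⊤ := measure_closedBall_lt_top.ne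
  have : IsFiniteMeasure (ballUniform d) := by
    constructor
    simp [ballUniform]
    exact ENNReal.mul_lt_top (ENNReal.inv_lt_top.2 (pos_iff_ne_zero.2 hvol0)) hvolT.lt_top
  have hac : ballUniform d ≪ volume :=
    (Measure.smul_absolutelyContinuous).trans Measure.restrict_le_self.absolutelyContinuous
  have hae : ∀ x : E, ∀ᵐ v : E, DifferentiableAt ℝ f (x + δ • v) := by
    intro x
    have hq : Measure.QuasiMeasurePreserving (fun v : E => x + δ • v) volume volume :=
      (measurePreserving_add_left volume x).quasiMeasurePreserving.comp
        (Measure.quasiMeasurePreserving_smul volume hδ.ne')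
    exact hq.ae hf.ae_differentiableAt
  have main : ∀ x : E, Integrable (fun v => fderiv ℝ f (x + δ • v)) (ballUniform d) ∧
      HasFDerivAt (fun y => ∫ v, f (y + δ • v) ∂(ballUniform d))
      (∫ v, fderiv ℝ f (x + δ • v) ∂(ballUniform d)) x := by
    intro x
    refine hasFDerivAt_integral_of_dominated_loc_of_lip (s := Set.univ)
      (bound := fun _ => (L.toNNReal : ℝ)) Filter.univ_mem ?_ ?_ ?_ ?_ ?_ ?_
    · exact .of_forall fun y => Continuous.aestronglyMeasurable (by fun_prop)
    · refine Integrable.of_bound (Continuous.aestronglyMeasurable (by fun_prop)) F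
        (.of_forall fun v => hbdd _)
    · exact ((measurable_fderiv ℝ f).comp (by fun_prop)).aestronglyMeasurable
    · refine .of_forall fun v => LipschitzOnWith.of_dist_le_mul fun y _ z _ => ?_
      simpa using hf.dist_le_mul (y + δ • v) (z + δ • v)
    · exact integrable_const _
    · filter_upwards [hac.ae_le (hae x)] with v hv
      exact (hasFDerivAt_comp_add_right (δ • v)).2 hv.hasFDerivAt
  refine ⟨fun x => (main x).2.differentiableAt, fun x => ?_⟩
  apply ext_inner_right ℝ
  intro e
  have hI : Integrable (fun u : sphere (0:E) 1 => ((d : ℝ) / δ * f (x + δ • (u : E))) • (u : E))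
      ((volume : Measure E).toSphere) :=
    Continuous.integrable_of_hasCompactSupport (by fun_prop)
      (HasCompactSupport.of_compactSpace _)
  have hdc : (closedBall (0:E) 1) =ᵐ[volume] ball (0:E) 1 := by
    exact (Measure.addHaar_closedBall_eq_addHaar_ball volume 0 1 |> fun h =>
      (ae_eq_of_subset_of_measure_ge ball_subset_closedBall h.le
        measurableSet_ball.nullMeasurableSet hvolT).symm)
  have hlap : LipschitzWith (L.toNNReal * ‖δ‖₊) (fun v : E => f (x + δ • v)) := by
    refine LipschitzWith.of_dist_le_mul fun y z => ?_
    refine (hf.dist_le_mul _ _).trans ?_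
    simp [dist_smul₀, mul_assoc]
  have hball := unit_ball_divergence d hd _ _ hlap e
  have hld : ∀ᵐ v : E, fderiv ℝ f (x + δ • v) e =
      δ⁻¹ * lineDeriv ℝ (fun v : E => f (x + δ • v)) v e := by
    filter_upwards [hae x] with v hv
    have h1 : HasFDerivAt (fun v : E => x + δ • v) (δ • ContinuousLinearMap.id ℝ E) v :=
      ((hasFDerivAt_id v).const_smul δ).const_add x
    have h2 := (hv.hasFDerivAt.comp v h1).hasLineDerivAt e
    have h3 := h2.lineDeriv
    have h4 : lineDeriv ℝ (fun v : E => f (x + δ • v)) v e = δ * fderiv ℝ f (x + δ • v) e := by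
      simpa [Function.comp_def] using h3
    rw [h4]
    field_simp
  rw [gradient, InnerProductSpace.toDual_symm_apply, (main x).2.fderiv,
    ContinuousLinearMap.integral_apply (main x).1]
  have hl : ∫ v, fderiv ℝ f (x + δ • v) e ∂(ballUniform d) =
      (volume.real (closedBall (0 : E) 1))⁻¹ * (δ⁻¹ *
      ∫ v in closedBall (0 : E) 1, lineDeriv ℝ (fun v : E => f (x + δ • v)) v e) := by
    rw [ballUniform, integral_smul_measure, ← integral_const_mul]
    rw [integral_congr_ae (ae_restrict_of_ae hld)]
    simp [Measure.real, ENNReal.toReal_inv, E]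
  rw [hl, hball, sphereUniform]
  rw [(MeasurableEmbedding.subtype_coe (isClosed_sphere.measurableSet)).integral_map,
    integral_smul_measure, real_inner_smul_left, real_inner_comm, ← integral_inner hI,
    Measure.toSphere_apply_univ, ← measure_congr hdc]
  have : ∀ u : sphere (0:E) 1, inner ℝ e (((d : ℝ) / δ * f (x + δ • (u : E))) • (u : E)) =
      (d : ℝ) / δ * (f (x + δ • (u : E)) * inner ℝ (u : E) e) := by
    intro u
    rw [inner_smul_right, real_inner_comm, mul_assoc]
  simp only [E] at this
  simp_rw [this]
  rw [integral_const_mul]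
  have hd' : (d : ℝ) ≠ 0 := by exact_mod_cast hd.ne'
  have hr : volume.real (closedBall (0 : E) 1) ≠ 0 := by
    simp only [Measure.real]; exact ENNReal.toReal_ne_zero.2 ⟨hvol0, hvolT⟩
  simp only [ENNReal.toReal_inv, ENNReal.toReal_mul, ENNReal.toReal_natCast, finrank_euclideanSpace,
    Fintype.card_fin, ← Measure.real_def]
  simp only [E] at hr ⊢
  field_simp
end

section
/- Unbiasedness of the two-point gradient estimator (Lemma 1, two-point case): Let f : ℝ^d → ℝ be Lipschitz continuous and bounded, and let δ > 0. Define the smoothed function f̌(x) := E_v[ f(x + δv) ], where v is uniformly distributed on the closed unit ball B = {v ∈ ℝ^d : ‖v‖ ≤ 1}. Then for every x ∈ ℝ^d, E_u[ (d/(2δ)) ( f(x + δu) − f(x − δu) ) u ] = ∇f̌(x), where u is uniformly distributed on the unit sphere S = {u ∈ ℝ^d : ‖u‖ = 1}. -/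
open MeasureTheory Metric

open Set Filter Topology in
theorem aux_polar {E : Type*} [NormedAddCommGroup E] [NormedSpace ℝ E] [MeasurableSpace E]
    [BorelSpace E] [FiniteDimensional ℝ E] [Nontrivial E] (μ : Measure E) [μ.IsAddHaarMeasure]
    (G : E → ℝ) (hG : Integrable G μ) :
    ∫ x, G x ∂μ = ∫ r in Ioi (0 : ℝ), r ^ (Module.finrank ℝ E - 1) *
      ∫ u : sphere (0 : E) 1, G (r • (u : E)) ∂μ.toSphere := by
  have hmp := μ.measurePreserving_homeomorphUnitSphereProd
  have hkey : ∀ x : ({(0)}ᶜ : Set E),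
      G (((homeomorphUnitSphereProd E x).2 : ℝ) • ((homeomorphUnitSphereProd E x).1 : E)) = G x := by
    intro x
    have hx : ‖(x : E)‖ ≠ 0 := norm_ne_zero_iff.2 x.2
    simp [smul_smul, hx]
  have hint : Integrable (fun p : sphere (0 : E) 1 × Ioi (0 : ℝ) => G ((p.2 : ℝ) • (p.1 : E)))
      (μ.toSphere.prod (.volumeIoiPow (Module.finrank ℝ E - 1))) := by
    rw [← hmp.integrable_comp_emb (Homeomorph.measurableEmbedding _)]
    simp only [Function.comp_def, hkey]
    have h1 : IntegrableOn G ({0}ᶜ : Set E) μ := hG.integrableOn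
    rwa [integrableOn_iff_comap_subtypeVal (measurableSet_singleton _).compl] at h1
  calc
    ∫ x, G x ∂μ = ∫ x : ({(0)}ᶜ : Set E), G x.1 ∂(μ.comap (↑)) := by
      rw [integral_subtype_comap (measurableSet_singleton _).compl fun x ↦ G x,
        restrict_compl_singleton]
    _ = ∫ p, G ((p.2 : ℝ) • (p.1 : E))
          ∂μ.toSphere.prod (.volumeIoiPow (Module.finrank ℝ E - 1)) := by
      rw [← hmp.integral_comp (Homeomorph.measurableEmbedding _)]
      simp only [hkey]
    _ = ∫ r : Ioi (0 : ℝ), (∫ u : sphere (0 : E) 1, G ((r : ℝ) • (u : E)) ∂μ.toSphere)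
          ∂.volumeIoiPow (Module.finrank ℝ E - 1) := integral_prod_symm _ hint
    _ = _ := by
      simp only [Measure.volumeIoiPow, ENNReal.ofReal]
      rw [integral_withDensity_eq_integral_smul,
        integral_subtype_comap measurableSet_Ioi fun a ↦ Real.toNNReal (a ^ (Module.finrank ℝ E - 1)) •
          (∫ u : sphere (0 : E) 1, G ((a : ℝ) • (u : E)) ∂μ.toSphere),
        setIntegral_congr_fun measurableSet_Ioi fun x hx ↦ ?_]
      · simp only [NNReal.smul_def]
        rw [Real.coe_toNNReal _ (pow_nonneg hx.out.le _), smul_eq_mul]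
      · exact (measurable_subtype_coe.pow_const _).real_toNNReal

theorem aux_cutoff_lip {E : Type*} [NormedAddCommGroup E] (R : ℝ) :
    LipschitzWith 1 (fun v : E => max (R - ‖v‖) 0) := by
  refine LipschitzWith.of_dist_le_mul fun a b => ?_
  rw [Real.dist_eq, dist_eq_norm, NNReal.coe_one, one_mul]
  calc _ ≤ |(R - ‖a‖) - (R - ‖b‖)| := abs_max_sub_max_le_abs _ _ _
    _ = |‖a‖ - ‖b‖| := by rw [abs_sub_comm]; congr 1; ring
    _ ≤ _ := abs_norm_sub_norm_le a b

theorem aux_cutoff_supp {E : Type*} [NormedAddCommGroup E] [ProperSpace E] (R : ℝ) :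
    HasCompactSupport (fun v : E => max (R - ‖v‖) 0) := by
  refine HasCompactSupport.of_support_subset_isCompact (isCompact_closedBall (0 : E) R) ?_
  intro v hv
  rw [Function.mem_support] at hv
  rw [mem_closedBall_zero_iff]
  by_contra h
  exact hv (max_eq_right (by linarith))

open Set Filter Topology in
theorem aux_cutoff_deriv {E : Type*} [NormedAddCommGroup E] [InnerProductSpace ℝ E]
    (R : ℝ) (v w : E) (hv : v ≠ 0) (hR : ‖v‖ ≠ R) :
    lineDeriv ℝ (fun v : E => max (R - ‖v‖) 0) v (-w) =
      (ball (0 : E) R).indicator (fun v => inner ℝ v w / ‖v‖) v := by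
  have hc : Tendsto (fun t : ℝ => ‖v + t • (-w)‖) (𝓝 0) (𝓝 ‖v‖) := by
    have : Continuous (fun t : ℝ => ‖v + t • (-w)‖) := by fun_prop
    simpa using this.tendsto 0
  rcases lt_or_gt_of_ne hR with h | h
  · rw [indicator_of_mem (by simpa using h)]
    apply HasLineDerivAt.lineDeriv
    unfold HasLineDerivAt
    have h1 : HasDerivAt (fun t : ℝ => R - ‖v + t • (-w)‖) (inner ℝ v w / ‖v‖) 0 := by
      have h2 : HasDerivAt (fun t : ℝ => v + t • (-w)) (-w) 0 := by
        simpa using ((hasDerivAt_id (0:ℝ)).smul_const (-w)).const_add v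
      have h3 := h2.norm_sq.sqrt (by simpa using hv)
      have h4 := h3.const_sub R
      simp only [Real.sqrt_sq (norm_nonneg _)] at h4
      convert! h4 using 1
      simp
      ring
    refine h1.congr_of_eventuallyEq ?_
    filter_upwards [hc.eventually (gt_mem_nhds h)] with t ht
    exact max_eq_left (by linarith)
  · rw [indicator_of_notMem (by simpa using h.le)]
    apply HasLineDerivAt.lineDeriv
    unfold HasLineDerivAt
    refine (hasDerivAt_const (0:ℝ) (0:ℝ)).congr_of_eventuallyEq ?_
    filter_upwards [hc.eventually (lt_mem_nhds h)] with t ht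
    exact max_eq_right (by linarith)

open Set Filter Topology in
theorem aux_step {E : Type*} [NormedAddCommGroup E] [InnerProductSpace ℝ E] [MeasurableSpace E]
    [BorelSpace E] [FiniteDimensional ℝ E] [Nontrivial E] (μ : Measure E) [μ.IsAddHaarMeasure]
    (g : E → ℝ) (C : NNReal) (hg : LipschitzWith C g) (w : E) (R : ℝ) (hR : 0 < R) :
    ∫ v, lineDeriv ℝ g v w * max (R - ‖v‖) 0 ∂μ = ∫ r in (0 : ℝ)..R,
      r ^ (Module.finrank ℝ E - 1) *
      ∫ u : sphere (0 : E) 1, g (r • (u : E)) * inner ℝ (u : E) w ∂μ.toSphere := by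
  rw [hg.integral_lineDeriv_mul_eq (aux_cutoff_lip R) (aux_cutoff_supp R)]
  have hae : ∀ᵐ v ∂μ, lineDeriv ℝ (fun v : E => max (R - ‖v‖) 0) v (-w) * g v =
      (ball (0 : E) R).indicator (fun v => inner ℝ v w / ‖v‖ * g v) v := by
    have h0 : ∀ᵐ v ∂μ, v ≠ 0 := by simp [ae_iff]
    have h1 : ∀ᵐ v ∂μ, ‖v‖ ≠ R := by
      have := Measure.addHaar_sphere μ (0 : E) R
      rw [ae_iff]
      convert this using 2
      ext v; simp
    filter_upwards [h0, h1] with v hv0 hv1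
    rw [aux_cutoff_deriv R v w hv0 hv1]
    by_cases h : v ∈ ball (0 : E) R <;> simp [h]
  rw [integral_congr_ae hae]
  have hint : Integrable ((ball (0 : E) R).indicator (fun v => inner ℝ v w / ‖v‖ * g v)) μ := by
    rw [integrable_indicator_iff measurableSet_ball]
    have hgi : IntegrableOn g (ball 0 R) μ :=
      (hg.continuous.continuousOn.integrableOn_compact (isCompact_closedBall (0:E) R)).mono_set
        ball_subset_closedBall
    refine Integrable.bdd_mul (c := ‖w‖) hgi ?_ ?_
    · refine Measurable.aestronglyMeasurable ?_
      have : Continuous (fun v : E => inner ℝ v w) := by fun_prop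
      exact this.measurable.div measurable_norm
    · refine Eventually.of_forall fun v => ?_
      rw [norm_div, norm_norm]
      refine div_le_of_le_mul₀ (norm_nonneg _) (norm_nonneg _) ?_
      rw [mul_comm]
      exact norm_inner_le_norm v w
  rw [aux_polar μ _ hint, intervalIntegral.integral_of_le hR.le, integral_Ioc_eq_integral_Ioo]
  rw [← Ioi_inter_Iio, ← setIntegral_indicator measurableSet_Iio]
  refine setIntegral_congr_fun measurableSet_Ioi fun r hr => ?_
  have hr' : 0 < r := hr
  by_cases h : r < R
  · simp only [indicator_of_mem (show r ∈ Iio R from h)]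
    congr 1
    refine integral_congr_ae (Eventually.of_forall fun u => ?_)
    have hu : ‖(u : E)‖ = 1 := by simp
    have : r • (u : E) ∈ ball (0 : E) R := by
      simpa [norm_smul, hu, abs_of_pos hr'] using h
    simp only [indicator_of_mem this, norm_smul, hu, inner_smul_left]
    simp [abs_of_pos hr', hr'.ne', mul_comm]
  · simp only [indicator_of_notMem (show r ∉ Iio R from h)]
    refine mul_eq_zero_of_right _ (integral_eq_zero_of_ae (Eventually.of_forall fun u => ?_))
    refine indicator_of_notMem ?_ _
    have hu : ‖(u : E)‖ = 1 := by simp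
    simpa [norm_smul, hu, abs_of_pos hr'] using h

open Set Filter Topology in
theorem aux_div {E : Type*} [NormedAddCommGroup E] [InnerProductSpace ℝ E] [MeasurableSpace E]
    [BorelSpace E] [FiniteDimensional ℝ E] [Nontrivial E] (μ : Measure E) [μ.IsAddHaarMeasure]
    (g : E → ℝ) (C : NNReal) (hg : LipschitzWith C g) (w : E) :
    ∫ v in closedBall (0 : E) 1, lineDeriv ℝ g v w ∂μ =
      ∫ u : sphere (0 : E) 1, g (u : E) * inner ℝ (u : E) w ∂μ.toSphere := by
  set H : ℝ → ℝ := fun r => r ^ (Module.finrank ℝ E - 1) *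
      ∫ u : sphere (0 : E) 1, g (r • (u : E)) * inner ℝ (u : E) w ∂μ.toSphere with hH
  have hHc : Continuous H := by
    refine (continuous_pow _).mul ?_
    have := continuous_parametric_integral_of_continuous (μ := μ.toSphere)
      (f := fun (r : ℝ) (u : sphere (0 : E) 1) => g (r • (u : E)) * inner ℝ (u : E) w)
      (s := univ) ?_ isCompact_univ
    · simpa using this
    · have := hg.continuous
      simp only [Function.uncurry_def]
      fun_prop
  have hmeas : AEStronglyMeasurable (fun v => lineDeriv ℝ g v w) μ :=
    aestronglyMeasurable_lineDeriv hg.continuous μ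
  have hbd : ∀ v, ‖lineDeriv ℝ g v w‖ ≤ C * ‖w‖ := fun v => norm_lineDeriv_le_of_lipschitz ℝ hg
  have hR : HasDerivAt (fun R => ∫ r in (0:ℝ)..R, H r) (H 1) 1 :=
    intervalIntegral.integral_hasDerivAt_right (hHc.intervalIntegrable _ _)
      hHc.aestronglyMeasurable.stronglyMeasurableAtFilter hHc.continuousAt
  have hL := (hasDerivAt_integral_of_dominated_loc_of_lip (𝕜 := ℝ) (μ := μ) (x₀ := (1:ℝ))
    (F := fun R v => lineDeriv ℝ g v w * max (R - ‖v‖) 0)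
    (F' := (closedBall (0:E) 1).indicator (fun v => lineDeriv ℝ g v w))
    (bound := (closedBall (0:E) 2).indicator (fun v => (C * ‖w‖ : ℝ)))
    (s := Ioo 0 2) (Ioo_mem_nhds (by norm_num) (by norm_num)) ?_ ?_ ?_ ?_ ?_ ?_).2
  · rw [integral_indicator measurableSet_closedBall] at hL
    have h := hL.unique (hR.congr_of_eventuallyEq ?_)
    · rw [h]; simp [hH]
    · filter_upwards [lt_mem_nhds (zero_lt_one' ℝ)] with R hR0
      exact aux_step μ g C hg w R hR0
  · exact Eventually.of_forall fun R => hmeas.mul (by fun_prop)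
  · refine Integrable.bdd_mul (c := C * ‖w‖) ?_ hmeas (Eventually.of_forall hbd)
    exact (aux_cutoff_lip (E := E) 1).continuous.integrable_of_hasCompactSupport (aux_cutoff_supp 1)
  · exact hmeas.indicator measurableSet_closedBall
  · refine Eventually.of_forall fun v => ?_
    refine LipschitzOnWith.of_dist_le_mul fun a ha b hb => ?_
    by_cases h : v ∈ closedBall (0:E) 2
    · simp only [indicator_of_mem h, Real.dist_eq, ← mul_sub, abs_mul]
      rw [Real.coe_nnabs, abs_of_nonneg (by positivity : (0:ℝ) ≤ C * ‖w‖)]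
      refine mul_le_mul (hbd v) ?_ (abs_nonneg _) (by positivity)
      refine (abs_max_sub_max_le_abs _ _ _).trans (le_of_eq ?_)
      congr 1; ring
    · have h' : 2 < ‖v‖ := by simpa using h
      have h1 : max (a - ‖v‖) 0 = 0 := max_eq_right (by linarith [ha.2])
      have h2 : max (b - ‖v‖) 0 = 0 := max_eq_right (by linarith [hb.2])
      simp only [h1, h2, dist_self]
      positivity
  · rw [integrable_indicator_iff measurableSet_closedBall]
    exact integrableOn_const (measure_closedBall_lt_top).ne
  · have h1 : ∀ᵐ v ∂μ, ‖v‖ ≠ 1 := by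
      have := Measure.addHaar_sphere μ (0 : E) 1
      rw [ae_iff]
      convert this using 2
      ext v; simp
    filter_upwards [h1] with v hv
    rcases lt_or_gt_of_ne hv with h | h
    · rw [indicator_of_mem (by simpa using h.le)]
      have h2 : HasDerivAt (fun R : ℝ => lineDeriv ℝ g v w * (R - ‖v‖)) (lineDeriv ℝ g v w) 1 := by
        simpa using ((hasDerivAt_id (1:ℝ)).sub_const ‖v‖).const_mul (lineDeriv ℝ g v w)
      refine h2.congr_of_eventuallyEq ?_
      filter_upwards [lt_mem_nhds h] with R hR
      rw [max_eq_left (by linarith)]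
    · rw [indicator_of_notMem (by simpa using h)]
      refine (hasDerivAt_const (1:ℝ) (0:ℝ)).congr_of_eventuallyEq ?_
      filter_upwards [gt_mem_nhds h] with R hR
      rw [max_eq_right (by linarith), mul_zero]

/-- Unbiasedness of the two-point gradient estimator (Lemma 1, two-point case):
for Lipschitz and bounded `f` and `δ > 0`, with `f̌(x) = E_v[f(x + δv)]`
(`v` uniform on the unit ball),
`E_u[(d/(2δ))(f(x + δu) − f(x − δu)) u] = ∇f̌(x)` (`u` uniform on the unit sphere). -/
theorem two_point_gradient_estimator_unbiased
    (d : ℕ) (hd : 0 < d)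
    (f : EuclideanSpace ℝ (Fin d) → ℝ)
    (L : ℝ) (hlip : ∀ x y, |f x - f y| ≤ L * ‖x - y‖)
    (F : ℝ) (hbdd : ∀ x, |f x| ≤ F)
    (δ : ℝ) (hδ : 0 < δ) :
    ∀ x, ∫ u, ((d : ℝ) / (2 * δ) * (f (x + δ • u) - f (x - δ • u))) • u
          ∂(sphereUniform d) =
        gradient (fun y => ∫ v, f (y + δ • v) ∂(ballUniform d)) x := by
  intro x
  have : Nonempty (Fin d) := ⟨⟨0, hd⟩⟩
  have hf : LipschitzWith L.toNNReal f := by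
    refine LipschitzWith.of_dist_le_mul fun a b => ?_
    rw [Real.dist_eq, dist_eq_norm]
    exact (hlip a b).trans (mul_le_mul_of_nonneg_right (Real.le_coe_toNNReal L) (norm_nonneg _))
  set μ : Measure (EuclideanSpace ℝ (Fin d)) := volume with hμ
  set g : EuclideanSpace ℝ (Fin d) → ℝ := fun v => f (x + δ • v) with hgdef
  set g' : EuclideanSpace ℝ (Fin d) → ℝ := fun v => f (x - δ • v) with hgdef'
  have hg : LipschitzWith (L.toNNReal * Real.toNNReal δ) g := by
    refine hf.comp (LipschitzWith.of_dist_le_mul fun a b => ?_)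
    rw [dist_add_left, dist_smul₀, Real.coe_toNNReal _ hδ.le, Real.norm_of_nonneg hδ.le]
  have hg' : LipschitzWith (L.toNNReal * Real.toNNReal δ) g' := by
    refine hf.comp (LipschitzWith.of_dist_le_mul fun a b => ?_)
    rw [dist_sub_left, dist_smul₀, Real.coe_toNNReal _ hδ.le, Real.norm_of_nonneg hδ.le]
  set V : ℝ := μ.real (closedBall (0 : EuclideanSpace ℝ (Fin d)) 1) with hV
  have hV' : μ.real (ball (0 : EuclideanSpace ℝ (Fin d)) 1) = V := by
    simp only [hV, Measure.real, Measure.addHaar_closedBall_eq_addHaar_ball]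
  have hVpos : 0 < V := by
    rw [hV]
    exact ENNReal.toReal_pos (measure_closedBall_pos μ _ one_pos).ne' measure_closedBall_lt_top.ne
  have hball : ∀ φ : EuclideanSpace ℝ (Fin d) → ℝ, ∫ v, φ v ∂(ballUniform d) =
      V⁻¹ * ∫ v in closedBall 0 1, φ v ∂μ := by
    intro φ
    rw [ballUniform, integral_smul_measure, ENNReal.toReal_inv, smul_eq_mul]
    rfl
  have hfin : IsFiniteMeasure (ballUniform d) := by
    rw [ballUniform]
    have : IsFiniteMeasure (volume.restrict (closedBall (0 : EuclideanSpace ℝ (Fin d)) 1)) :=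
      ⟨by simpa using measure_closedBall_lt_top⟩
    exact Measure.smul_finite _
      (ENNReal.inv_ne_top.2 (measure_closedBall_pos volume _ one_pos).ne')
  have hac : ballUniform d ≪ μ :=
    (Measure.smul_absolutelyContinuous).trans Measure.restrict_le_self.absolutelyContinuous
  have hdiff : ∀ᵐ v ∂(ballUniform d), DifferentiableAt ℝ g v := hac.ae_le hg.ae_differentiableAt
  obtain ⟨hDint, hD⟩ := hasFDerivAt_integral_of_dominated_loc_of_lip (𝕜 := ℝ)
    (μ := ballUniform d) (x₀ := x) (F := fun y v => f (y + δ • v))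
    (F' := fun v => δ⁻¹ • fderiv ℝ g v) (bound := fun _ => (L.toNNReal : ℝ)) (s := Set.univ)
    Filter.univ_mem
    (Filter.Eventually.of_forall fun y =>
      (hf.continuous.comp (by fun_prop : Continuous fun v => y + δ • v)).aestronglyMeasurable)
    (by
      refine Integrable.of_bound hg.continuous.aestronglyMeasurable F
        (Filter.Eventually.of_forall fun v => hbdd _))
    ((measurable_fderiv ℝ g).const_smul δ⁻¹).aestronglyMeasurable
    (Filter.Eventually.of_forall fun v => by
      refine LipschitzOnWith.of_dist_le_mul fun a _ b _ => ?_
      have := hf.dist_le_mul (a + δ • v) (b + δ • v)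
      rw [dist_add_right] at this
      simpa using this)
    (integrable_const _)
    (by
      filter_upwards [hdiff] with v hv
      have h1 : HasFDerivAt (fun y : EuclideanSpace ℝ (Fin d) => v + δ⁻¹ • (y - x))
          (δ⁻¹ • ContinuousLinearMap.id ℝ (EuclideanSpace ℝ (Fin d))) x :=
        (((hasFDerivAt_id x).sub_const x).const_smul δ⁻¹).const_add v
      have h2 : HasFDerivAt g (fderiv ℝ g v) (v + δ⁻¹ • (x - x)) := by
        simpa using hv.hasFDerivAt
      have h3 := h2.comp x h1
      convert! h3 using 1
      · funext y
        simp only [hgdef, Function.comp_apply, smul_add, smul_smul, mul_inv_cancel₀ hδ.ne', one_smul]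
        congr 1
        abel
      · ext w; simp)
  have hgrad : gradient (fun y => ∫ v, f (y + δ • v) ∂(ballUniform d)) x =
      (InnerProductSpace.toDual ℝ _).symm (∫ v, δ⁻¹ • fderiv ℝ g v ∂(ballUniform d)) := by
    rw [gradient, hD.fderiv]
  rw [hgrad]
  refine ext_inner_right ℝ fun w => ?_
  rw [InnerProductSpace.toDual_symm_apply, ContinuousLinearMap.integral_apply hDint]
  have hR : ∫ v, (δ⁻¹ • fderiv ℝ g v) w ∂(ballUniform d) =
      δ⁻¹ * (V⁻¹ * ∫ v in closedBall 0 1, lineDeriv ℝ g v w ∂μ) := by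
    rw [← hball, ← integral_const_mul]
    refine integral_congr_ae ?_
    filter_upwards [hdiff] with v hv
    rw [hv.lineDeriv_eq_fderiv]
    simp
  rw [hR]
  have e1 := aux_div μ g _ hg w
  have e2 := aux_div μ g' _ hg' w
  have e3 : ∫ v in closedBall 0 1, lineDeriv ℝ g' v w ∂μ =
      - ∫ v in closedBall 0 1, lineDeriv ℝ g v w ∂μ := by
    have h1 : ∀ v, lineDeriv ℝ g' v w = - lineDeriv ℝ g (-v) w := by
      intro v
      rw [← lineDeriv_neg]
      simp only [lineDeriv, hgdef, hgdef']
      congr 1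
      funext t
      congr 1
      simp only [smul_add, smul_neg]
      abel
    simp only [h1]
    rw [integral_neg]
    congr 1
    have hmp : MeasurePreserving (fun v : EuclideanSpace ℝ (Fin d) => -v) μ μ :=
      Measure.measurePreserving_neg μ
    have h2 := hmp.setIntegral_preimage_emb (MeasurableEquiv.neg _).measurableEmbedding
      (fun v => lineDeriv ℝ g v w) (closedBall 0 1)
    rw [← h2]
    congr 2
    ext v; simp
  set σ := μ.toSphere with hσ
  have hi : ∀ h : EuclideanSpace ℝ (Fin d) → ℝ, Continuous h →
      Integrable (fun u : sphere (0 : EuclideanSpace ℝ (Fin d)) 1 => h u * inner ℝ (u : EuclideanSpace ℝ (Fin d)) w) σ := by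
    intro h hh
    have : Continuous (fun u : sphere (0 : EuclideanSpace ℝ (Fin d)) 1 => h u * inner ℝ (u : EuclideanSpace ℝ (Fin d)) w) := by
      fun_prop
    exact this.integrable_of_hasCompactSupport (HasCompactSupport.of_compactSpace _)
  have hgc := hg.continuous
  have hgc' := hg'.continuous
  have hLHS : inner ℝ (∫ u, ((d : ℝ) / (2 * δ) * (f (x + δ • u) - f (x - δ • u))) • u
          ∂(sphereUniform d)) w = (d * V)⁻¹ * ((d : ℝ) / (2 * δ) *
          (∫ u : sphere (0 : EuclideanSpace ℝ (Fin d)) 1, g u * inner ℝ (u : EuclideanSpace ℝ (Fin d)) w ∂σ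
           - ∫ u : sphere (0 : EuclideanSpace ℝ (Fin d)) 1, g' u * inner ℝ (u : EuclideanSpace ℝ (Fin d)) w ∂σ)) := by
    have hcont : Continuous (fun u : EuclideanSpace ℝ (Fin d) => ((d : ℝ) / (2 * δ) * (g u - g' u)) • u) := by
      fun_prop
    have hint : Integrable (fun u : sphere (0 : EuclideanSpace ℝ (Fin d)) 1 =>
        ((d : ℝ) / (2 * δ) * (g u - g' u)) • (u : EuclideanSpace ℝ (Fin d))) σ :=
      (hcont.comp continuous_subtype_val).integrable_of_hasCompactSupport
        (HasCompactSupport.of_compactSpace _)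
    rw [sphereUniform, integral_map measurable_subtype_coe.aemeasurable
      hcont.aestronglyMeasurable, integral_smul_measure, real_inner_smul_left]
    congr 1
    · rw [ENNReal.toReal_inv]
      congr 1
      have := μ.toSphere_real_apply_univ
      rw [hV'] at this
      simpa [Measure.real] using this
    · rw [real_inner_comm, ← integral_inner hint, ← integral_sub (hi g hgc) (hi g' hgc'),
        ← integral_const_mul]
      refine integral_congr_ae (Filter.Eventually.of_forall fun u => ?_)
      simp only [real_inner_smul_right]
      rw [real_inner_comm]
      ring
  rw [hLHS, ← e1, ← e2, e3]
  have hd' : (d : ℝ) ≠ 0 := by positivity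
  field_simp
  ring
end
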